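/- The redundant information is commutative in the source variables: Red(X,Y→Z) = Red(Y,X→Z), i.e., I(X;Z) − Un(X→Z|Y) = I(Y;Z) − Un(Y→Z|X). -/

import Mathlib

/-!
Let `J(x, y, z) = p(x, z) p(y, z) / p(z)` be the law with the same `(X, Z)`- and `(Y, Z)`-marginals
as `p` under which `X` and `Y` are conditionally independent given `Z`. The `(X, Z)`-marginal of
`do(p | c_y)` is the law of `(X, Z)` given `Y = y` under `J`, so the unique information
`Un(X → Z | Y)` is the conditional mutual information `I(X; Z | Y)` of `J`. Hence `Red(X, Y → Z)` is
`I(X; Z) - I(X; Z | Y)` computed in `J`, that is, the co-information of `J`, which is symmetric in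
its three variables. As `J` does not depend on the order of the sources, neither does `Red`.
-/

open Finset

/-- Shannon entropy of a distribution on a finite type (natural-log base). -/
noncomputable def ent {α : Type*} [Fintype α] (p : α → ℝ) : ℝ :=
  ∑ a, Real.negMulLog (p a)

/-- Mutual information between the two coordinates of a joint distribution. -/
noncomputable def mutInfo {α β : Type*} [Fintype α] [Fintype β] (q : α × β → ℝ) : ℝ :=
  ent (fun a => ∑ b, q (a, b)) + ent (fun b => ∑ a, q (a, b)) - ent q

/-- Conditional entropy of the first coordinate given the second: H(A|B) = H(A,B) - H(B). -/
noncomputable def condEntFst {α β : Type*} [Fintype α] [Fintype β] (q : α × β → ℝ) : ℝ :=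
  ent q - ent (fun b => ∑ a, q (a, b))

/-- Conditional entropy of the second coordinate given the first: H(B|A) = H(A,B) - H(A). -/
noncomputable def condEntSnd {α β : Type*} [Fintype α] [Fintype β] (q : α × β → ℝ) : ℝ :=
  ent q - ent (fun a => ∑ b, q (a, b))

section PID

variable {X Y Z : Type*} [Fintype X] [Fintype Y] [Fintype Z]

/-- 𝒳-marginal of a joint distribution on 𝒳×𝒴×𝒵. -/
noncomputable def pX (p : X × Y × Z → ℝ) (x : X) : ℝ := ∑ y, ∑ z, p (x, y, z)

/-- 𝒴-marginal. -/
noncomputable def pY (p : X × Y × Z → ℝ) (y : Y) : ℝ := ∑ x, ∑ z, p (x, y, z)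

/-- 𝒵-marginal. -/
noncomputable def pZ (p : X × Y × Z → ℝ) (z : Z) : ℝ := ∑ x, ∑ y, p (x, y, z)

/-- The do-operation: q(x,y,z) = p(x,y,z)·c(z)/p_Z(z) if p_Z(z) > 0, else 0. -/
noncomputable def doOp (p : X × Y × Z → ℝ) (c : Z → ℝ) : X × Y × Z → ℝ :=
  fun t => if 0 < pZ p t.2.2 then p t * c t.2.2 / pZ p t.2.2 else 0

/-- (𝒳,𝒵)-marginal. -/
noncomputable def margXZ (p : X × Y × Z → ℝ) : X × Z → ℝ := fun t => ∑ y, p (t.1, y, t.2)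

/-- (𝒴,𝒵)-marginal. -/
noncomputable def margYZ (p : X × Y × Z → ℝ) : Y × Z → ℝ := fun t => ∑ x, p (x, t.1, t.2)

/-- (𝒳,𝒴)-marginal. -/
noncomputable def margXY (p : X × Y × Z → ℝ) : X × Y → ℝ := fun t => ∑ z, p (t.1, t.2, z)

/-- c_y(z) = Pr(Z = z | Y = y). -/
noncomputable def cy (p : X × Y × Z → ℝ) (y : Y) : Z → ℝ :=
  fun z => (∑ x, p (x, y, z)) / pY p y

/-- The distribution of (A_y, B_y, C_y) = do(p | c_y). -/
noncomputable def doy (p : X × Y × Z → ℝ) (y : Y) : X × Y × Z → ℝ := doOp p (cy p y)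

/-- c^x(z) = Pr(Z = z | X = x). -/
noncomputable def cx (p : X × Y × Z → ℝ) (x : X) : Z → ℝ :=
  fun z => (∑ y, p (x, y, z)) / pX p x

/-- The distribution of (A^x, B^x, C^x) = do(p | c^x). -/
noncomputable def dox (p : X × Y × Z → ℝ) (x : X) : X × Y × Z → ℝ := doOp p (cx p x)

/-- Unique information Un(X→Z|Y) = Σ_{y : p_Y(y)>0} p_Y(y)·I(A_y;C_y). -/
noncomputable def Un (p : X × Y × Z → ℝ) : ℝ :=
  ∑ y ∈ Finset.univ.filter (fun y => 0 < pY p y), pY p y * mutInfo (margXZ (doy p y))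

/-- Unique information Un(Y→Z|X) = Σ_{x : p_X(x)>0} p_X(x)·I(B^x;C^x). -/
noncomputable def UnYX (p : X × Y × Z → ℝ) : ℝ :=
  ∑ x ∈ Finset.univ.filter (fun x => 0 < pX p x), pX p x * mutInfo (margYZ (dox p x))

/-- Redundant information Red(X,Y→Z) = I(X;Z) − Un(X→Z|Y). -/
noncomputable def Red (p : X × Y × Z → ℝ) : ℝ := mutInfo (margXZ p) - Un p

/-- Conditional mutual information I(X;Z|Y) = H(X,Y) + H(Y,Z) − H(Y) − H(X,Y,Z). -/
noncomputable def condMI (p : X × Y × Z → ℝ) : ℝ :=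
  ent (margXY p) + ent (margYZ p) - ent (pY p) - ent p

/-- Synergistic information Syn(X,Y→Z) = I(X;Z|Y) − Un(X→Z|Y). -/
noncomputable def Syn (p : X × Y × Z → ℝ) : ℝ := condMI p - Un p

end PID

section Entropy

variable {α β : Type*} [Fintype α] [Fintype β]

theorem ent_const_mul (c : ℝ) (f : α → ℝ) :
    ent (fun a => c * f a) = c * ent f + c.negMulLog * ∑ a, f a := by
  simp only [ent, Real.negMulLog_mul, sum_add_distrib, mul_sum]
  rw [add_comm]
  simp only [mul_comm]

theorem mutInfo_const_mul (c : ℝ) (q : α × β → ℝ) :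
    mutInfo (fun t => c * q t) = c * mutInfo q + c.negMulLog * ∑ t, q t := by
  have sum_fst : ∑ a, ∑ b, q (a, b) = ∑ t, q t := (Fintype.sum_prod_type q).symm
  have sum_snd : ∑ b, ∑ a, q (a, b) = ∑ t, q t := (Fintype.sum_prod_type_right q).symm
  simp only [mutInfo, ← mul_sum, ent_const_mul, sum_fst, sum_snd]
  ring

theorem sum_mul_mutInfo_div_sum {q : α × β → ℝ} (hq : 0 ≤ q) :
    (∑ t, q t) * mutInfo (fun t => q t / ∑ u, q u) = mutInfo q - (∑ t, q t).negMulLog := by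
  obtain hs | hs := eq_or_ne (∑ t, q t) 0
  · have q_eq_zero : q = 0 := (Fintype.sum_eq_zero_iff_of_nonneg hq).1 hs
    simp [q_eq_zero, mutInfo, ent]
  · have scaled := mutInfo_const_mul (∑ t, q t) (fun t => q t / ∑ u, q u)
    simp only [mul_div_cancel₀ _ hs, ← sum_div, div_self hs, mul_one] at scaled
    exact eq_sub_of_add_eq scaled.symm

end Entropy

section Coupling

variable {X Y Z : Type*} {p : X × Y × Z → ℝ}

/-- The joint law with the two source variables interchanged. It carries each notion for
`X → Z | Y` to its counterpart for `Y → Z | X`. -/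
def swapSources (p : X × Y × Z → ℝ) : Y × X × Z → ℝ := fun t => p (t.2.1, t.1, t.2.2)

theorem margXZ_nonneg [Fintype Y] (hp : 0 ≤ p) : 0 ≤ margXZ p :=
  fun _ => sum_nonneg fun _ _ => hp _

theorem pY_nonneg [Fintype X] [Fintype Z] (hp : 0 ≤ p) : 0 ≤ pY p :=
  fun _ => sum_nonneg fun _ _ => sum_nonneg fun _ _ => hp _

theorem pY_eq_sum_margYZ [Fintype X] [Fintype Z] (p : X × Y × Z → ℝ) (y : Y) :
    pY p y = ∑ z, margYZ p (y, z) :=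
  sum_comm

variable [Fintype X] [Fintype Y]

theorem pZ_nonneg (hp : 0 ≤ p) : 0 ≤ pZ p :=
  fun _ => sum_nonneg fun _ _ => sum_nonneg fun _ _ => hp _

theorem pZ_eq_sum_margYZ (p : X × Y × Z → ℝ) (z : Z) : pZ p z = ∑ y, margYZ p (y, z) :=
  sum_comm

theorem pZ_swapSources (p : X × Y × Z → ℝ) : pZ (swapSources p) = pZ p :=
  funext fun _ => sum_comm

theorem doOp_swapSources (p : X × Y × Z → ℝ) (c : Z → ℝ) :
    doOp (swapSources p) c = swapSources (doOp p c) := by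
  funext t
  simp only [doOp, pZ_swapSources, swapSources]

theorem margXZ_eq_zero_of_pZ_eq_zero (hp : 0 ≤ p) {z : Z} (hz : pZ p z = 0) (x : X) :
    margXZ p (x, z) = 0 :=
  congrFun ((Fintype.sum_eq_zero_iff_of_nonneg fun x => margXZ_nonneg hp (x, z)).1 hz) x

theorem margXZ_doOp (hp : 0 ≤ p) (c : Z → ℝ) (x : X) (z : Z) :
    margXZ (doOp p c) (x, z) = margXZ p (x, z) * c z / pZ p z := by
  obtain hz | hz := (pZ_nonneg hp z).eq_or_lt'
  · simp [margXZ, doOp, hz]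
  · simp only [margXZ, doOp, sum_mul, sum_div]
    exact sum_congr rfl fun _ _ => if_pos hz

/-- The law `p(x, z) p(y, z) / p(z)`, which makes the sources conditionally independent given `Z`
while keeping their joint laws with `Z`. Division by zero gives the value `0` wherever
`p(z) = 0`. -/
noncomputable def condIndepCoupling (p : X × Y × Z → ℝ) : X × Y × Z → ℝ :=
  fun t => margXZ p (t.1, t.2.2) * margYZ p t.2 / pZ p t.2.2

theorem condIndepCoupling_nonneg (hp : 0 ≤ p) : 0 ≤ condIndepCoupling p :=
  fun _ => div_nonneg (mul_nonneg (margXZ_nonneg hp _) (sum_nonneg fun _ _ => hp _))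
    (pZ_nonneg hp _)

theorem condIndepCoupling_swapSources (p : X × Y × Z → ℝ) :
    condIndepCoupling (swapSources p) = swapSources (condIndepCoupling p) := by
  funext ⟨y, x, z⟩
  simp only [condIndepCoupling, pZ_swapSources, swapSources]
  exact congrArg (· / pZ p z) (mul_comm _ _)

theorem margXZ_condIndepCoupling (hp : 0 ≤ p) : margXZ (condIndepCoupling p) = margXZ p := by
  funext ⟨x, z⟩
  calc margXZ (condIndepCoupling p) (x, z)
      = margXZ p (x, z) * pZ p z / pZ p z := by
        rw [pZ_eq_sum_margYZ p z, mul_sum, sum_div, ← pZ_eq_sum_margYZ]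
        rfl
    _ = margXZ p (x, z) :=
        mul_div_cancel_of_imp fun hz => margXZ_eq_zero_of_pZ_eq_zero hp hz x

theorem margYZ_condIndepCoupling (hp : 0 ≤ p) : margYZ (condIndepCoupling p) = margYZ p := by
  have swapped := margXZ_condIndepCoupling (p := swapSources p) fun _ => hp _
  rwa [condIndepCoupling_swapSources] at swapped

end Coupling

section Information

variable {X Y Z : Type*} [Fintype X] [Fintype Y] [Fintype Z] {p : X × Y × Z → ℝ}

theorem ent_swapSources (p : X × Y × Z → ℝ) : ent (swapSources p) = ent p := by
  simp only [ent, Fintype.sum_prod_type]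
  exact sum_comm

theorem ent_margXY_swapSources (p : X × Y × Z → ℝ) :
    ent (margXY (swapSources p)) = ent (margXY p) := by
  simp only [ent, Fintype.sum_prod_type]
  exact sum_comm

theorem mutInfo_margXZ (q : X × Y × Z → ℝ) :
    mutInfo (margXZ q) = ent (pX q) + ent (pZ q) - ent (margXZ q) := by
  have pX_eq : (fun x => ∑ z, margXZ q (x, z)) = pX q := funext fun _ => sum_comm
  rw [mutInfo, pX_eq]
  rfl

theorem mutInfo_sub_condMI_swapSources (q : X × Y × Z → ℝ) :
    mutInfo (margXZ (swapSources q)) - condMI (swapSources q) =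
      mutInfo (margXZ q) - condMI q := by
  have pX_swap : pX (swapSources q) = pY q := rfl
  have pY_swap : pY (swapSources q) = pX q := rfl
  have margXZ_swap : margXZ (swapSources q) = margYZ q := rfl
  have margYZ_swap : margYZ (swapSources q) = margXZ q := rfl
  rw [mutInfo_margXZ, mutInfo_margXZ, condMI, condMI, pX_swap, pY_swap, pZ_swapSources,
    margXZ_swap, margYZ_swap, ent_margXY_swapSources, ent_swapSources]
  ring

theorem condMI_eq_sum_mutInfo {q : X × Y × Z → ℝ} (hq : 0 ≤ q) :
    condMI q = ∑ y, pY q y * mutInfo (fun t : X × Z => q (t.1, y, t.2) / pY q y) := by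
  have slice_sum (y : Y) : ∑ t : X × Z, q (t.1, y, t.2) = pY q y := Fintype.sum_prod_type _
  have slice_mutInfo (y : Y) :
      pY q y * mutInfo (fun t : X × Z => q (t.1, y, t.2) / pY q y) =
        mutInfo (fun t : X × Z => q (t.1, y, t.2)) - (pY q y).negMulLog := by
    rw [← slice_sum]
    exact sum_mul_mutInfo_div_sum fun t => hq (t.1, y, t.2)
  have ent_XY : ent (margXY q) = ∑ y, ent (fun x => ∑ z, q (x, y, z)) :=
    Fintype.sum_prod_type_right _
  have ent_YZ : ent (margYZ q) = ∑ y, ent (fun z => ∑ x, q (x, y, z)) :=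
    Fintype.sum_prod_type _
  have ent_XYZ : ent q = ∑ y, ent (fun t : X × Z => q (t.1, y, t.2)) := by
    simp only [ent, Fintype.sum_prod_type]
    exact sum_comm
  calc condMI q
      = ∑ y, (mutInfo (fun t : X × Z => q (t.1, y, t.2)) - (pY q y).negMulLog) := by
        simp only [mutInfo, sum_sub_distrib, sum_add_distrib]
        rw [condMI, ent_XY, ent_YZ, ent_XYZ, sub_right_comm]
        rfl
    _ = ∑ y, pY q y * mutInfo (fun t : X × Z => q (t.1, y, t.2) / pY q y) :=
        sum_congr rfl fun y _ => (slice_mutInfo y).symm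

theorem un_swapSources (p : X × Y × Z → ℝ) : Un (swapSources p) = UnYX p := by
  have doy_swapSources (x : X) : doy (swapSources p) x = swapSources (dox p x) :=
    doOp_swapSources p (cx p x)
  simp only [Un, doy_swapSources]
  rfl

theorem pY_condIndepCoupling (hp : 0 ≤ p) : pY (condIndepCoupling p) = pY p := by
  funext y
  rw [pY_eq_sum_margYZ, margYZ_condIndepCoupling hp, ← pY_eq_sum_margYZ]

theorem margXZ_doy (hp : 0 ≤ p) (y : Y) :
    margXZ (doy p y) = fun t => condIndepCoupling p (t.1, y, t.2) / pY p y := by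
  funext ⟨x, z⟩
  rw [doy, margXZ_doOp hp, cy, mul_div_assoc', div_right_comm]
  rfl

theorem un_eq_condMI_condIndepCoupling (hp : 0 ≤ p) : Un p = condMI (condIndepCoupling p) := by
  rw [condMI_eq_sum_mutInfo (condIndepCoupling_nonneg hp), pY_condIndepCoupling hp]
  simp only [Un, margXZ_doy hp]
  exact sum_filter_of_ne fun y _ hy => (pY_nonneg hp y).lt_of_ne' (left_ne_zero_of_mul hy)

theorem red_eq_mutInfo_sub_condMI (hp : 0 ≤ p) :
    Red p = mutInfo (margXZ (condIndepCoupling p)) - condMI (condIndepCoupling p) := by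
  rw [Red, margXZ_condIndepCoupling hp, un_eq_condMI_condIndepCoupling hp]

theorem red_swapSources (hp : 0 ≤ p) : Red (swapSources p) = Red p := by
  have swap_nonneg : 0 ≤ swapSources p := fun _ => hp _
  rw [red_eq_mutInfo_sub_condMI swap_nonneg, condIndepCoupling_swapSources,
    mutInfo_sub_condMI_swapSources, red_eq_mutInfo_sub_condMI hp]

end Information

theorem stmt12_general {X Y Z : Type*} [Fintype X] [Fintype Y] [Fintype Z]
    (p : X × Y × Z → ℝ) (hp0 : ∀ t, 0 ≤ p t) :
    mutInfo (margXZ p) - Un p = mutInfo (margYZ p) - UnYX p :=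
  calc mutInfo (margXZ p) - Un p
      = Red (swapSources p) := (red_swapSources hp0).symm
    _ = mutInfo (margYZ p) - UnYX p := by rw [Red, un_swapSources]; rfl

theorem stmt12 {X Y Z : Type*} [Fintype X] [Fintype Y] [Fintype Z]
    [Nonempty X] [Nonempty Y] [Nonempty Z]
    (p : X × Y × Z → ℝ) (hp0 : ∀ t, 0 ≤ p t) (hp1 : ∑ t, p t = 1) :
    mutInfo (margXZ p) - Un p = mutInfo (margYZ p) - UnYX p :=
  stmt12_general p hp0
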